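/- Let (X,T) be a topological dynamical system with a compatible metric d. Then the lower metric mean dimension satisfies mdim_M^-(T,X,d) = liminf_{ε→0} [ sup_{μ∈E(X,T)} ḥ^K_μ(T,ε) ] / log(1/ε) = liminf_{ε→0} [ sup_{μ∈E(X,T)} h̄^K_μ(T,ε) ] / log(1/ε), where the suprema are over all ergodic T-invariant Borel probability measures. -/

import Mathlib

open Filter MeasureTheory Set
open scoped ENNReal Topology

noncomputable section

namespace MMD

variable {X : Type*}

/-- The `n`-th Bowen metric `d_n(x,y) = max_{0 ≤ j ≤ n-1} d(T^j x, T^j y)`. -/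
noncomputable def bowenDist [PseudoMetricSpace X] (T : X → X) (n : ℕ) (x y : X) : ℝ :=
  ⨆ j : Fin n, dist (T^[(j : ℕ)] x) (T^[(j : ℕ)] y)

/-- `r_n(T,d,ε,Z)`: minimal cardinality of an `(n,ε)`-spanning set of `Z`. -/
noncomputable def spanNum [PseudoMetricSpace X] (T : X → X) (n : ℕ) (ε : ℝ) (Z : Set X) : ℕ :=
  sInf {k | ∃ E : Finset X, E.card = k ∧ ∀ z ∈ Z, ∃ y ∈ E, bowenDist T n z y < ε}

/-- `s_n(T,d,ε,Z)`: maximal cardinality of an `(n,ε)`-separated subset of `Z`. -/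
noncomputable def sepNum [PseudoMetricSpace X] (T : X → X) (n : ℕ) (ε : ℝ) (Z : Set X) : ℕ :=
  sSup {k | ∃ F : Finset X, ↑F ⊆ Z ∧ F.card = k ∧
    ∀ x ∈ F, ∀ y ∈ F, x ≠ y → ε ≤ bowenDist T n x y}

/-- `limsup_{n→∞} (1/n) log r_n(T,d,ε,X)`. -/
noncomputable def spanGrowth [PseudoMetricSpace X] (T : X → X) (ε : ℝ) : ℝ≥0∞ :=
  Filter.limsup (fun n : ℕ => ENNReal.ofReal (Real.log (spanNum T n ε Set.univ)) / (n : ℝ≥0∞))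
    Filter.atTop

/-- Upper metric mean dimension. -/
noncomputable def mdimMUpper [PseudoMetricSpace X] (T : X → X) : ℝ≥0∞ :=
  Filter.limsup (fun ε : ℝ => spanGrowth T ε / ENNReal.ofReal (Real.log (1 / ε)))
    (nhdsWithin 0 (Set.Ioi 0))

/-- Lower metric mean dimension. -/
noncomputable def mdimMLower [PseudoMetricSpace X] (T : X → X) : ℝ≥0∞ :=
  Filter.liminf (fun ε : ℝ => spanGrowth T ε / ENNReal.ofReal (Real.log (1 / ε)))
    (nhdsWithin 0 (Set.Ioi 0))

/-- A finite (Borel) partition given as a finite set of measurable, pairwise disjoint sets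
covering the space. -/
def IsFinPartition {Y : Type*} [MeasurableSpace Y] (P : Finset (Set Y)) : Prop :=
  (∀ s ∈ P, MeasurableSet s) ∧ (∀ s ∈ P, ∀ t ∈ P, s ≠ t → Disjoint s t) ∧
    ⋃₀ (P : Set (Set Y)) = Set.univ

/-- Mutual information `I(ξ;η)` of two random variables, as the supremum over finite
measurable partitions of the target spaces. -/
noncomputable def mutualInfo {Ω A B : Type*} [MeasurableSpace Ω] [MeasurableSpace A]
    [MeasurableSpace B] (P : Measure Ω) (ξ : Ω → A) (η : Ω → B) : ℝ≥0∞ :=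
  ⨆ (p : Finset (Set A)) (_ : IsFinPartition p) (q : Finset (Set B)) (_ : IsFinPartition q),
    ENNReal.ofReal (∑ s ∈ p, ∑ t ∈ q,
      (P (ξ ⁻¹' s ∩ η ⁻¹' t)).toReal *
        Real.log ((P (ξ ⁻¹' s ∩ η ⁻¹' t)).toReal /
          ((P (ξ ⁻¹' s)).toReal * (P (η ⁻¹' t)).toReal)))

/-- The `L^∞` rate distortion function `R_{μ,L∞}(ε,s)`: the infimum of `I(ξ;η)/n` over all
`n ≥ 1` and all joint distributions `ν` of `(ξ, (η_0,…,η_{n-1}))` such that `ξ` has law `μ`,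
the `η_k` take (almost surely) finitely many values, and
`E(#{0 ≤ k ≤ n-1 : d(T^k ξ, η_k) ≥ ε}) < s n`. -/
noncomputable def RDistLInftyS [PseudoMetricSpace X] [MeasurableSpace X] (T : X → X)
    (μ : Measure X) (ε s : ℝ) : ℝ≥0∞ :=
  ⨅ (n : ℕ) (_ : 0 < n) (ν : Measure (X × (Fin n → X))) (_ : IsProbabilityMeasure ν)
    (_ : ν.map Prod.fst = μ) (_ : ∃ S : Finset X, ν {p | ∀ k, p.2 k ∈ S} = 1)
    (_ : ∫⁻ p, (Nat.card {k : Fin n // ε ≤ dist (T^[(k : ℕ)] p.1) (p.2 k)} : ℝ≥0∞) ∂ν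
        < ENNReal.ofReal (s * n)),
    mutualInfo ν Prod.fst Prod.snd / (n : ℝ≥0∞)

/-- `R_{μ,L∞}(ε) = lim_{s→0} R_{μ,L∞}(ε,s)` (the limit equals the supremum over `s > 0`
by monotonicity). -/
noncomputable def RDistLInfty [PseudoMetricSpace X] [MeasurableSpace X] (T : X → X)
    (μ : Measure X) (ε : ℝ) : ℝ≥0∞ :=
  ⨆ (s : ℝ) (_ : 0 < s), RDistLInftyS T μ ε s

/-- The `L¹` rate distortion function `R_{μ,1}(ε)`. -/
noncomputable def RDistL1 [PseudoMetricSpace X] [MeasurableSpace X] (T : X → X)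
    (μ : Measure X) (ε : ℝ) : ℝ≥0∞ :=
  ⨅ (n : ℕ) (_ : 0 < n) (ν : Measure (X × (Fin n → X))) (_ : IsProbabilityMeasure ν)
    (_ : ν.map Prod.fst = μ) (_ : ∃ S : Finset X, ν {p | ∀ k, p.2 k ∈ S} = 1)
    (_ : ∫⁻ p, ∑ k : Fin n, ENNReal.ofReal (dist (T^[(k : ℕ)] p.1) (p.2 k)) ∂ν
        < ENNReal.ofReal (ε * n)),
    mutualInfo ν Prod.fst Prod.snd / (n : ℝ≥0∞)

/-- `R^δ_μ(T,n,ε)`: minimal number of Bowen `(n,ε)`-balls whose union has `μ`-measure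
greater than `1 - δ`. -/
noncomputable def katokNum [PseudoMetricSpace X] [MeasurableSpace X] (T : X → X)
    (μ : Measure X) (n : ℕ) (ε δ : ℝ) : ℕ :=
  sInf {k | ∃ E : Finset X, E.card = k ∧
    ENNReal.ofReal (1 - δ) < μ (⋃ x ∈ E, {y | bowenDist T n x y < ε})}

/-- `h̄^K_μ(T,ε,δ)`. -/
noncomputable def katokUpperD [PseudoMetricSpace X] [MeasurableSpace X] (T : X → X)
    (μ : Measure X) (ε δ : ℝ) : ℝ≥0∞ :=
  Filter.limsup (fun n : ℕ => ENNReal.ofReal (Real.log (katokNum T μ n ε δ)) / (n : ℝ≥0∞))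
    Filter.atTop

/-- `ḥ^K_μ(T,ε,δ)`. -/
noncomputable def katokLowerD [PseudoMetricSpace X] [MeasurableSpace X] (T : X → X)
    (μ : Measure X) (ε δ : ℝ) : ℝ≥0∞ :=
  Filter.liminf (fun n : ℕ => ENNReal.ofReal (Real.log (katokNum T μ n ε δ)) / (n : ℝ≥0∞))
    Filter.atTop

/-- `h̄^K_μ(T,ε) = lim_{δ→0} h̄^K_μ(T,ε,δ)` (equal to the supremum over `δ ∈ (0,1)` by
monotonicity). -/
noncomputable def katokUpper [PseudoMetricSpace X] [MeasurableSpace X] (T : X → X)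
    (μ : Measure X) (ε : ℝ) : ℝ≥0∞ :=
  ⨆ (δ : ℝ) (_ : δ ∈ Set.Ioo (0 : ℝ) 1), katokUpperD T μ ε δ

/-- `ḥ^K_μ(T,ε) = lim_{δ→0} ḥ^K_μ(T,ε,δ)`. -/
noncomputable def katokLower [PseudoMetricSpace X] [MeasurableSpace X] (T : X → X)
    (μ : Measure X) (ε : ℝ) : ℝ≥0∞ :=
  ⨆ (δ : ℝ) (_ : δ ∈ Set.Ioo (0 : ℝ) 1), katokLowerD T μ ε δ

/-- The empirical measure `(1/n) Σ_{j=0}^{n-1} δ_{T^j x}`. -/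
noncomputable def empMeas [MeasurableSpace X] (T : X → X) (n : ℕ) (x : X) : Measure X :=
  (n : ℝ≥0∞)⁻¹ • ∑ j ∈ Finset.range n, Measure.dirac (T^[j] x)

/-- Pfister–Sullivan entropy `PS_μ(T,d,ε)`: infimum over weak* open neighborhoods `F` of `μ`
of `limsup_n (1/n) log s_n(T,d,ε,X_{n,F})`, where
`X_{n,F} = {x : (1/n) Σ_{j<n} δ_{T^j x} ∈ F}`. -/
noncomputable def PSent [MetricSpace X] [MeasurableSpace X] [OpensMeasurableSpace X]
    (T : X → X) (μ : ProbabilityMeasure X) (ε : ℝ) : ℝ≥0∞ :=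
  ⨅ (F : Set (ProbabilityMeasure X)) (_ : IsOpen F) (_ : μ ∈ F),
    Filter.limsup (fun n : ℕ => ENNReal.ofReal (Real.log (sepNum T n ε
      {x : X | ∃ h : IsProbabilityMeasure (empMeas T n x),
        (⟨empMeas T n x, h⟩ : ProbabilityMeasure X) ∈ F})) / (n : ℝ≥0∞)) Filter.atTop

/-- Partition entropy `H_μ(P) = Σ_{A∈P} -μ(A) log μ(A)`. -/
noncomputable def entP [MeasurableSpace X] (μ : Measure X) (P : Finset (Set X)) : ℝ≥0∞ :=
  ∑ A ∈ P, ENNReal.ofReal (-((μ A).toReal * Real.log ((μ A).toReal)))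

/-- The join `P^n = ∨_{j=0}^{n-1} T^{-j} P`. -/
noncomputable def joinN (T : X → X) (P : Finset (Set X)) (n : ℕ) : Finset (Set X) :=
  letI : DecidableEq (Set X) := Classical.decEq _
  (Fintype.piFinset (fun _ : Fin n => P)).image (fun f => ⋂ j : Fin n, T^[(j : ℕ)] ⁻¹' f j)

/-- `h_μ(T,P) = lim_n H_μ(P^n)/n` (the limit exists and equals the liminf). -/
noncomputable def entRate [MeasurableSpace X] (T : X → X) (μ : Measure X)
    (P : Finset (Set X)) : ℝ≥0∞ :=
  Filter.liminf (fun n : ℕ => entP μ (joinN T P n) / (n : ℝ≥0∞)) Filter.atTop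

/-- `inf { h_μ(T,P) : P a finite Borel partition with diam P ≤ ε }`. -/
noncomputable def infEntRate [PseudoMetricSpace X] [MeasurableSpace X] (T : X → X)
    (μ : Measure X) (ε : ℝ) : ℝ≥0∞ :=
  ⨅ (P : Finset (Set X)) (_ : IsFinPartition P) (_ : ∀ s ∈ P, Metric.diam s ≤ ε),
    entRate T μ P

/-- Kolmogorov–Sinai entropy `h_μ(T)`. -/
noncomputable def ksEntropy [MeasurableSpace X] (T : X → X) (μ : Measure X) : ℝ≥0∞ :=
  ⨆ (P : Finset (Set X)) (_ : IsFinPartition P), entRate T μ P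

/-- A finite open cover. -/
def IsFinOpenCover [TopologicalSpace X] (α : Finset (Set X)) : Prop :=
  (∀ A ∈ α, IsOpen A) ∧ ⋃₀ (α : Set (Set X)) = Set.univ

/-- `ord(β) = max_x #{B ∈ β : x ∈ B} - 1`. -/
noncomputable def ordCover (β : Finset (Set X)) : ℕ :=
  sSup {k | ∃ x : X, Nat.card {B : Set X // B ∈ β ∧ x ∈ B} = k} - 1

/-- `D(α) = min_{β ≻ α} ord(β)`, over finite open covers `β` refining `α`. -/
noncomputable def Dcover [TopologicalSpace X] (α : Finset (Set X)) : ℕ :=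
  sInf {k | ∃ β : Finset (Set X), IsFinOpenCover β ∧ (∀ B ∈ β, ∃ A ∈ α, B ⊆ A) ∧
    ordCover β = k}

/-- Mean (topological) dimension `mdim(X,T) = sup_α lim_n D(α^n)/n`. -/
noncomputable def mdimTop [TopologicalSpace X] (T : X → X) : ℝ≥0∞ :=
  ⨆ (α : Finset (Set X)) (_ : IsFinOpenCover α),
    Filter.liminf (fun n : ℕ => (Dcover (joinN T α n) : ℝ≥0∞) / (n : ℝ≥0∞)) Filter.atTop

/-- The marker property for a homeomorphism. -/
def MarkerProperty [TopologicalSpace X] (T : X ≃ₜ X) : Prop :=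
  ∀ N : ℕ, 0 < N → ∃ U : Set X, IsOpen U ∧
    (∀ n : ℕ, 1 ≤ n → n ≤ N → U ∩ (⇑T)^[n] '' U = ∅) ∧
    ⋃ n : ℤ, ⇑(T.toEquiv ^ n) '' U = Set.univ

/-- Upper dimension `limsup_{ε→0} F(μ,ε)/log(1/ε)` associated with a candidate `F`. -/
noncomputable def dimFUpper [MeasurableSpace X] (F : Measure X → ℝ → ℝ≥0∞)
    (μ : Measure X) : ℝ≥0∞ :=
  Filter.limsup (fun ε : ℝ => F μ ε / ENNReal.ofReal (Real.log (1 / ε)))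
    (nhdsWithin 0 (Set.Ioi 0))

/-- Lower dimension `liminf_{ε→0} F(μ,ε)/log(1/ε)` associated with a candidate `F`. -/
noncomputable def dimFLower [MeasurableSpace X] (F : Measure X → ℝ → ℝ≥0∞)
    (μ : Measure X) : ℝ≥0∞ :=
  Filter.liminf (fun ε : ℝ => F μ ε / ENNReal.ofReal (Real.log (1 / ε)))
    (nhdsWithin 0 (Set.Ioi 0))

/-- A candidate function: for each invariant probability measure `μ`, `F(μ,·)` is
non-decreasing as `ε` decreases, and `F(μ,ε) → h_μ(T)` as `ε → 0⁺`. -/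
def IsCandidate [MeasurableSpace X] (T : X → X) (F : Measure X → ℝ → ℝ≥0∞) : Prop :=
  ∀ μ : Measure X, IsProbabilityMeasure μ → MeasurePreserving T μ μ →
    (∀ ε₁ ε₂ : ℝ, 0 < ε₁ → ε₁ ≤ ε₂ → F μ ε₂ ≤ F μ ε₁) ∧
    Filter.Tendsto (F μ) (nhdsWithin 0 (Set.Ioi 0)) (nhds (ksEntropy T μ))

end MMD

open MMD

/-
Any `(n, ε)`-spanning set also covers most of the space for every measure, so both suprema are at
most the spanning growth rate at scale `ε`. Conversely, suppose that every ergodic measure has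
lower Katok entropy less than `h` at scale `ε`. Then for every ergodic `ν` and arbitrarily small
`δ` there are an arbitrarily large `n` and an open `U` with `ν(Uᶜ) < δ` which is covered by
`exp (n h)` sets of `d_n`-diameter at most `2ε`. An orbit segment of length `N` that spends a
proportion less than `δ` of its time outside `U` is a concatenation of blocks of length `n`
starting in `U` and of few single steps, so such segments are covered by `exp (N h')` sets with
`h'` close to `h`. This is used twice. By the mean ergodic theorem and the ergodic decomposition,
for an invariant measure finitely many such `U` account for most orbit segments, so that the
covering property passes from ergodic to invariant measures. Since limits of empirical measures
are invariant, compactness then shows that finitely many `U` account for all long orbit segments.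
Hence the spanning growth rate at scale `2ε` is at most `h`, and replacing `ε` by `2ε` does not
affect the limit because `log (1 / ε) / log (1 / (2ε)) → 1`.
-/

namespace MMD

section BowenCovers

variable {X : Type*} [PseudoMetricSpace X] {T : X → X} {ε r r' h : ℝ} {n m N : ℕ} {Z Z' : Set X}

/-- `Z` is covered by at most `r` sets of `d_n`-diameter at most `ε`, in the sense that any two
points of one of these sets are `ε`-close at each time `j < n`. Unlike covers by Bowen balls, such
covers can be concatenated in time without loss in `ε`. The bound `r` is real so that
exponentials can be used. -/
def HasBowenCover (T : X → X) (ε : ℝ) (n : ℕ) (Z : Set X) (r : ℝ) : Prop :=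
  ∃ 𝒰 : Finset (Set X), (𝒰.card : ℝ) ≤ r ∧ Z ⊆ ⋃₀ 𝒰 ∧
    ∀ U ∈ 𝒰, ∀ x ∈ U, ∀ y ∈ U, ∀ j < n, dist (T^[j] x) (T^[j] y) < ε

theorem HasBowenCover.mono (hZ : HasBowenCover T ε n Z r) (hsub : Z' ⊆ Z) (hr : r ≤ r') :
    HasBowenCover T ε n Z' r' := by
  obtain ⟨𝒰, hcard, hcov, hdiam⟩ := hZ
  exact ⟨𝒰, hcard.trans hr, hsub.trans hcov, hdiam⟩

theorem HasBowenCover.union (hZ : HasBowenCover T ε n Z r) (hZ' : HasBowenCover T ε n Z' r') :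
    HasBowenCover T ε n (Z ∪ Z') (r + r') := by
  classical
  obtain ⟨𝒰, hcard, hcov, hdiam⟩ := hZ
  obtain ⟨𝒰', hcard', hcov', hdiam'⟩ := hZ'
  refine ⟨𝒰 ∪ 𝒰', ?_, ?_, fun U hU => (Finset.mem_union.1 hU).elim (hdiam U) (hdiam' U)⟩
  · exact le_trans (mod_cast Finset.card_union_le 𝒰 𝒰') (add_le_add hcard hcard')
  · rw [Finset.coe_union, sUnion_union]
    exact union_subset_union hcov hcov'

theorem HasBowenCover.biUnion {ι : Type*} {s : Finset ι} {Z : ι → Set X}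
    (hZ : ∀ i ∈ s, HasBowenCover T ε n (Z i) r) :
    HasBowenCover T ε n (⋃ i ∈ s, Z i) (s.card * r) := by
  classical
  induction s using Finset.induction_on with
  | empty => exact ⟨∅, by simp, by simp, by simp⟩
  | insert a s ha ih =>
    rw [Finset.set_biUnion_insert, Finset.card_insert_of_notMem ha, Nat.cast_succ, add_one_mul,
      add_comm]
    exact (hZ a (Finset.mem_insert_self a s)).union
      (ih fun i hi => hZ i (Finset.mem_insert_of_mem hi))

theorem HasBowenCover.inter_preimage (hZ : HasBowenCover T ε n Z r)
    (hZ' : HasBowenCover T ε m Z' r') :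
    HasBowenCover T ε (n + m) (Z ∩ T^[n] ⁻¹' Z') (r * r') := by
  classical
  obtain ⟨𝒰, hcard, hcov, hdiam⟩ := hZ
  obtain ⟨𝒰', hcard', hcov', hdiam'⟩ := hZ'
  refine ⟨Finset.image₂ (fun U U' => U ∩ T^[n] ⁻¹' U') 𝒰 𝒰', ?_, ?_, ?_⟩
  · refine le_trans (b := (𝒰.card : ℝ) * 𝒰'.card) (mod_cast Finset.card_image₂_le _ 𝒰 𝒰') ?_
    exact mul_le_mul hcard hcard' (by positivity) ((Nat.cast_nonneg _).trans hcard)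
  · rintro x ⟨hx, hx'⟩
    obtain ⟨U, hU, hxU⟩ := hcov hx
    obtain ⟨U', hU', hxU'⟩ := hcov' hx'
    exact ⟨_, Finset.mem_coe.2 (Finset.mem_image₂_of_mem hU hU'), hxU, hxU'⟩
  · intro W hW x hx y hy j hj
    obtain ⟨U, hU, U', hU', rfl⟩ := Finset.mem_image₂.1 hW
    rcases lt_or_ge j n with hjn | hnj
    · exact hdiam U hU x hx.1 y hy.1 j hjn
    · obtain ⟨k, rfl⟩ := Nat.exists_eq_add_of_le' hnj
      simpa only [Function.iterate_add_apply] using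
        hdiam' U' hU' _ hx.2 _ hy.2 k (by omega)

theorem hasBowenCover_zero (T : X → X) (ε : ℝ) (Z : Set X) : HasBowenCover T ε 0 Z 1 :=
  ⟨{univ}, by simp, by simp, by simp⟩

theorem HasBowenCover.iterate_univ (hone : HasBowenCover T ε 1 univ (Real.exp h)) (n : ℕ) :
    HasBowenCover T ε n univ (Real.exp (n * h)) := by
  induction n with
  | zero => simpa using hasBowenCover_zero T ε univ
  | succ k ih =>
    have hstep := ih.inter_preimage hone
    rwa [preimage_univ, univ_inter, ← Real.exp_add, ← add_one_mul, ← Nat.cast_succ] at hstep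

theorem exists_hasBowenCover_one [CompactSpace X] (T : X → X) (hε : 0 < ε) :
    ∃ h, 0 ≤ h ∧ HasBowenCover T ε 1 univ (Real.exp h) := by
  classical
  obtain ⟨t, -, htfin, hcov⟩ := isCompact_univ.finite_cover_balls (half_pos hε) (X := X)
  refine ⟨htfin.toFinset.card, Nat.cast_nonneg _,
    htfin.toFinset.image fun c => Metric.ball c (ε / 2), ?_, ?_, ?_⟩
  · calc ((htfin.toFinset.image _).card : ℝ) ≤ htfin.toFinset.card := mod_cast Finset.card_image_le
      _ ≤ htfin.toFinset.card + 1 := (lt_add_one _).le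
      _ ≤ _ := Real.add_one_le_exp _
  · simpa using hcov
  · intro U hU x hx y hy j hj
    obtain ⟨c, -, rfl⟩ := Finset.mem_image.1 hU
    rw [Nat.lt_one_iff.1 hj]
    exact (dist_triangle_right x y c).trans_lt
      ((add_lt_add (Metric.mem_ball.1 hx) (Metric.mem_ball.1 hy)).trans_eq (add_halves ε))

theorem eventually_hasBowenCover_biUnion {ι : Type*} {s : Finset ι} {Z : ι → ℕ → Set X}
    (hZ : ∀ i ∈ s, ∀ᶠ N : ℕ in atTop, HasBowenCover T ε N (Z i N) (Real.exp (N * h))) {h' : ℝ}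
    (hh' : h < h') :
    ∀ᶠ N : ℕ in atTop, HasBowenCover T ε N (⋃ i ∈ s, Z i N) (Real.exp (N * h')) := by
  have hlarge : ∀ᶠ N : ℕ in atTop, (s.card : ℝ) ≤ N * (h' - h) :=
    (tendsto_natCast_atTop_atTop.atTop_mul_const (sub_pos.2 hh')).eventually_ge_atTop _
  filter_upwards [(eventually_all_finset s).2 hZ, hlarge] with N hN hcard
  refine (HasBowenCover.biUnion hN).mono Subset.rfl ?_
  calc s.card * Real.exp (N * h) ≤ Real.exp (N * (h' - h)) * Real.exp (N * h) := by
        gcongr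
        exact hcard.trans ((le_add_of_nonneg_right zero_le_one).trans (Real.add_one_le_exp _))
    _ = Real.exp (N * h') := by rw [← Real.exp_add]; ring_nf

end BowenCovers

section BowenBalls

variable {X : Type*} [PseudoMetricSpace X] {T : X → X} {ε r : ℝ} {n : ℕ}

theorem bowenDist_lt_iff (hε : 0 < ε) {x y : X} :
    bowenDist T n x y < ε ↔ ∀ j < n, dist (T^[j] x) (T^[j] y) < ε := by
  rw [bowenDist]
  rcases n.eq_zero_or_pos with rfl | hn
  · simp [hε]
  · have : Nonempty (Fin n) := Fin.pos_iff_nonempty.1 hn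
    refine ⟨fun h j hj => (le_ciSup (Finite.bddAbove_range _) (⟨j, hj⟩ : Fin n)).trans_lt h,
      fun h => ?_⟩
    obtain ⟨j, hj⟩ := exists_eq_ciSup_of_finite
      (f := fun j : Fin n => dist (T^[(j : ℕ)] x) (T^[(j : ℕ)] y))
    exact hj ▸ h j j.2

theorem hasBowenCover_biUnion_ball (hε : 0 < ε) (n : ℕ) (E : Finset X) :
    HasBowenCover T (2 * ε) n (⋃ x ∈ E, {y | bowenDist T n x y < ε}) E.card := by
  classical
  refine ⟨E.image fun x => {y | bowenDist T n x y < ε}, mod_cast Finset.card_image_le, by simp, ?_⟩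
  intro U hU y hy z hz j hj
  obtain ⟨x, -, rfl⟩ := Finset.mem_image.1 hU
  have hxy := (bowenDist_lt_iff hε).1 hy j hj
  have hxz := (bowenDist_lt_iff hε).1 hz j hj
  linarith [dist_triangle_left (T^[j] y) (T^[j] z) (T^[j] x)]

theorem isOpen_biUnion_bowenBall (hT : Continuous T) (hε : 0 < ε) (n : ℕ) (E : Finset X) :
    IsOpen (⋃ x ∈ E, {y | bowenDist T n x y < ε}) := by
  refine isOpen_biUnion fun x _ => ?_
  have hball : {y | bowenDist T n x y < ε} =
      ⋂ j ∈ Finset.range n, {y | dist (T^[j] x) (T^[j] y) < ε} := by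
    ext y
    simp [bowenDist_lt_iff hε]
  rw [hball]
  exact isOpen_biInter_finset fun j _ =>
    isOpen_lt (continuous_const.dist (hT.iterate j)) continuous_const

theorem HasBowenCover.exists_spanning (hε : 0 < ε) (hcov : HasBowenCover T ε n univ r) :
    ∃ E : Finset X, (E.card : ℝ) ≤ r ∧ ∀ z, ∃ y ∈ E, bowenDist T n z y < ε := by
  classical
  obtain ⟨𝒰, hcard, huniv, hdiam⟩ := hcov
  have hpick : ∀ U : Set X, ∃ E : Finset X, E.card ≤ 1 ∧ ∀ z ∈ U, ∃ y ∈ E, y ∈ U := fun U => by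
    rcases U.eq_empty_or_nonempty with rfl | ⟨y, hy⟩
    · exact ⟨∅, by simp, by simp⟩
    · exact ⟨{y}, by simp, fun _ _ => ⟨y, by simp, hy⟩⟩
  choose E hE hEU using hpick
  refine ⟨𝒰.biUnion E, le_trans ?_ hcard, fun z => ?_⟩
  · exact_mod_cast (Finset.card_biUnion_le_card_mul 𝒰 E 1 fun U _ => hE U).trans_eq (mul_one _)
  · obtain ⟨U, hU, hzU⟩ := huniv (mem_univ z)
    obtain ⟨y, hy, hyU⟩ := hEU U z hzU
    exact ⟨y, Finset.mem_biUnion.2 ⟨U, hU, hy⟩, (bowenDist_lt_iff hε).2 (hdiam U hU z hzU y hyU)⟩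

theorem HasBowenCover.spanNum_le (hε : 0 < ε) (hcov : HasBowenCover T ε n univ r) :
    (spanNum T n ε univ : ℝ) ≤ r := by
  obtain ⟨E, hE, hspan⟩ := hcov.exists_spanning hε
  refine le_trans (mod_cast Nat.sInf_le ⟨E, rfl, fun z _ => hspan z⟩) hE

end BowenBalls

section Tiling

/-- The points which spend a proportion less than `δ` of the times `j < N` outside `Z`. -/
def mostlyIn {X : Type*} (T : X → X) (Z : Set X) (δ : ℝ) (N : ℕ) : Set X :=
  {x | birkhoffAverage ℝ T (Zᶜ.indicator 1) N x < δ}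

theorem isOpen_mostlyIn {X : Type*} [TopologicalSpace X] {T : X → X} (hT : Continuous T)
    {Z : Set X} (hZ : IsOpen Z) (δ : ℝ) (N : ℕ) : IsOpen (mostlyIn T Z δ N) := by
  have hind : UpperSemicontinuous (Zᶜ.indicator fun _ => (N : ℝ)⁻¹) :=
    hZ.isClosed_compl.upperSemicontinuous_indicator (by positivity)
  have hsum : UpperSemicontinuous
      fun x => ∑ j ∈ Finset.range N, Zᶜ.indicator (fun _ => (N : ℝ)⁻¹) (T^[j] x) :=
    upperSemicontinuous_sum fun j _ => hind.comp (hT.iterate j)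
  convert upperSemicontinuous_iff_isOpen_preimage.1 hsum δ using 1
  ext x
  have hscale (y : X) : (N : ℝ)⁻¹ * Zᶜ.indicator 1 y = Zᶜ.indicator (fun _ => (N : ℝ)⁻¹) y := by
    by_cases hy : y ∈ Zᶜ <;> simp [hy]
  simp [mostlyIn, birkhoffAverage, birkhoffSum, Finset.mul_sum, hscale]

theorem birkhoffSum_indicator_one_nonneg {X : Type*} (T : X → X) (s : Set X) (N : ℕ) (x : X) :
    0 ≤ birkhoffSum T (s.indicator (1 : X → ℝ)) N x :=
  Finset.sum_nonneg fun _ _ => indicator_nonneg (fun _ _ => zero_le_one) _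

theorem exp_add_exp_le_exp {a b c : ℝ} (hac : a + Real.log 2 ≤ c) (hbc : b + Real.log 2 ≤ c) :
    Real.exp a + Real.exp b ≤ Real.exp c := by
  have ha := Real.exp_le_exp.2 hac
  have hb := Real.exp_le_exp.2 hbc
  rw [Real.exp_add, Real.exp_log two_pos] at ha hb
  linarith

variable {X : Type*} [PseudoMetricSpace X] {T : X → X} {ε h h' k : ℝ} {n M : ℕ} {Z : Set X}
  {a b δ : ℝ}

theorem HasBowenCover.inter_birkhoffSum_le (hZ : HasBowenCover T ε n Z (Real.exp h))
    (hM : HasBowenCover T ε M {x | birkhoffSum T (Zᶜ.indicator (1 : X → ℝ)) M x ≤ b} (Real.exp a)) :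
    HasBowenCover T ε (n + M)
      (Z ∩ {x | birkhoffSum T (Zᶜ.indicator (1 : X → ℝ)) (n + M) x ≤ b}) (Real.exp (h + a)) := by
  refine (hZ.inter_preimage hM).mono (inter_subset_inter_right Z fun x hx => ?_)
    (Real.exp_add h a).ge
  exact (le_add_of_nonneg_left (birkhoffSum_indicator_one_nonneg T Zᶜ n x)).trans
    ((birkhoffSum_add T _ n M x).symm.trans_le hx)

theorem HasBowenCover.compl_inter_birkhoffSum_le
    (hone : HasBowenCover T ε 1 univ (Real.exp k))
    (hM : 0 ≤ b - 1 → HasBowenCover T ε M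
      {x | birkhoffSum T (Zᶜ.indicator (1 : X → ℝ)) M x ≤ b - 1} (Real.exp a)) :
    HasBowenCover T ε (1 + M)
      (Zᶜ ∩ {x | birkhoffSum T (Zᶜ.indicator (1 : X → ℝ)) (1 + M) x ≤ b}) (Real.exp (k + a)) := by
  have hsub : Zᶜ ∩ {x | birkhoffSum T (Zᶜ.indicator (1 : X → ℝ)) (1 + M) x ≤ b} ⊆
      T ⁻¹' {x | birkhoffSum T (Zᶜ.indicator (1 : X → ℝ)) M x ≤ b - 1} := by
    rintro x ⟨hxZ, hx⟩
    rw [mem_ofPred_eq, birkhoffSum_add, birkhoffSum_one, indicator_of_mem hxZ] at hx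
    exact le_sub_iff_add_le'.2 hx
  rcases lt_or_ge (b - 1) 0 with hb | hb
  · have hempty : {x | birkhoffSum T (Zᶜ.indicator (1 : X → ℝ)) M x ≤ b - 1} = ∅ :=
      eq_empty_of_forall_notMem fun x hx =>
        (hx.trans_lt hb).not_ge (birkhoffSum_indicator_one_nonneg T Zᶜ M x)
    rw [hempty, preimage_empty] at hsub
    exact ⟨∅, by simpa using (Real.exp_pos _).le, by simpa using hsub, by simp⟩
  · exact (hone.inter_preimage (hM hb)).mono (by simpa using hsub) (Real.exp_add k a).ge

theorem HasBowenCover.setOf_birkhoffSum_le (hone : HasBowenCover T ε 1 univ (Real.exp k))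
    (hk : 0 ≤ k) (hn : 0 < n) (hh : 0 ≤ h) (hZ : HasBowenCover T ε n Z (Real.exp (n * h)))
    (N : ℕ) (hb : 0 ≤ b) :
    HasBowenCover T ε N {x | birkhoffSum T (Zᶜ.indicator (1 : X → ℝ)) N x ≤ b}
      (Real.exp ((b + n) * (k + Real.log 2) + N * (h + Real.log 2 / n))) := by
  induction N using Nat.strong_induction_on generalizing b with
  | _ N ih =>
  rcases lt_or_ge N n with hNn | hnN
  · refine (hone.iterate_univ N).mono (subset_univ _) (Real.exp_le_exp.2 ?_)
    have : (N : ℝ) * k ≤ n * k := by gcongr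
    have : 0 ≤ b * (k + Real.log 2) + n * Real.log 2 + N * (h + Real.log 2 / n) := by positivity
    linarith
  · obtain ⟨M, rfl⟩ := Nat.exists_eq_add_of_le hnN
    obtain ⟨L, hL⟩ : ∃ L, n + M = 1 + L := Nat.exists_eq_add_of_le (hn.trans_le hnN)
    have hgood := hZ.inter_birkhoffSum_le (ih M (by omega) hb)
    have hbad := hone.compl_inter_birkhoffSum_le (Z := Z) (b := b) (ih L (by omega))
    have hLM : (1 + L : ℝ) = n + M := mod_cast hL.symm
    rw [← hL] at hbad
    refine (hgood.union hbad).mono (fun x hx => ?_) (exp_add_exp_le_exp ?_ ?_)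
    · exact (em (x ∈ Z)).imp (⟨·, hx⟩) (⟨·, hx⟩)
    · push_cast
      field_simp
      linarith
    · push_cast
      have : 0 ≤ h + Real.log 2 / n := by positivity
      have : (n + M) * (h + Real.log 2 / n) = (1 + L) * (h + Real.log 2 / n) := by rw [hLM]
      linarith

theorem HasBowenCover.eventually_mostlyIn (hone : HasBowenCover T ε 1 univ (Real.exp k))
    (hk : 0 ≤ k) (hn : 0 < n) (hh : 0 ≤ h) (hZ : HasBowenCover T ε n Z (Real.exp (n * h)))
    (hδ : 0 ≤ δ) (hh' : h + Real.log 2 / n + δ * (k + Real.log 2) < h') :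
    ∀ᶠ N : ℕ in atTop, HasBowenCover T ε N (mostlyIn T Z δ N) (Real.exp (N * h')) := by
  have hlarge : ∀ᶠ N : ℕ in atTop, n * (k + Real.log 2) ≤
      N * (h' - (h + Real.log 2 / n + δ * (k + Real.log 2))) :=
    (tendsto_natCast_atTop_atTop.atTop_mul_const (sub_pos.2 hh')).eventually_ge_atTop _
  filter_upwards [hlarge, eventually_gt_atTop 0] with N hN hN0
  refine (hone.setOf_birkhoffSum_le hk hn hh hZ N (b := N * δ) (by positivity)).mono
    (fun x hx => ?_) (Real.exp_le_exp.2 (by linarith))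
  have hN0' : (0 : ℝ) < N := mod_cast hN0
  rw [mostlyIn, mem_ofPred_eq, birkhoffAverage, smul_eq_mul, inv_mul_lt_iff₀ hN0'] at hx
  exact hx.le

end Tiling

section MeanErgodic

variable {X : Type*} [MeasurableSpace X] {T : X → X} {μ : Measure X}

theorem aestronglyMeasurable_birkhoffAverage (hT : Measure.QuasiMeasurePreserving T μ μ)
    {f : X → ℝ} (hf : AEStronglyMeasurable f μ) (n : ℕ) :
    AEStronglyMeasurable (birkhoffAverage ℝ T f n) μ :=
  (Finset.aestronglyMeasurable_fun_sum (Finset.range n) fun k _ =>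
    hf.comp_quasiMeasurePreserving (hT.iterate k)).const_smul (n : ℝ)⁻¹

theorem aestronglyMeasurable_invariants (hT : Measure.QuasiMeasurePreserving T μ μ) {g : X → ℝ}
    (hg : AEStronglyMeasurable g μ) (hinv : g ∘ T =ᵐ[μ] g) :
    AEStronglyMeasurable[MeasurableSpace.invariants T] g μ := by
  obtain ⟨g', hg', hgg'⟩ := hg
  have hstep : g' ∘ T =ᵐ[μ] g' := (hT.ae_eq_comp hgg'.symm).trans (hinv.trans hgg')
  have horbit : ∀ᵐ x ∂μ, ∀ n, g' (T^[n] x) = g' x := by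
    refine ae_all_iff.2 fun n => ?_
    induction n with
    | zero => exact .of_forall fun _ => rfl
    | succ n ih =>
      filter_upwards [(hT.iterate n).ae_eq_comp hstep, ih] with x hx hn
      rw [Function.iterate_succ_apply']
      exact hx.trans hn
  let G : X → ℝ := fun x => limUnder atTop fun n => g' (T^[n] x)
  have hG : Measurable G := (StronglyMeasurable.limUnder fun n =>
    hg'.comp_measurable (hT.measurable.iterate n)).measurable
  have hGT : G ∘ T = G := funext fun x => by
    simp only [G, Function.comp_apply, ← Function.iterate_succ_apply, limUnder]
    conv_rhs => rw [← map_add_atTop_eq_nat 1, map_map]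
    rfl
  refine ⟨G, (MeasurableSpace.measurable_invariants_dom.2
    ⟨hG, fun s _ => by rw [hGT]⟩).stronglyMeasurable, hgg'.trans ?_⟩
  filter_upwards [horbit] with x hx
  simp only [G, hx]
  exact tendsto_const_nhds.limUnder_eq.symm

theorem eqLocus_compMeasurePreserving_eq_lpMeas (hT : MeasurePreserving T μ μ) :
    (Lp.compMeasurePreservingₗᵢ ℝ T hT : Lp ℝ 2 μ →ₗᵢ[ℝ] _).toContinuousLinearMap.eqLocus
      (1 : Lp ℝ 2 μ →L[ℝ] Lp ℝ 2 μ) = lpMeas ℝ ℝ (MeasurableSpace.invariants T) 2 μ := by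
  ext f
  have hfix : (Lp.compMeasurePreserving T hT f = f) ↔ f ∘ T =ᵐ[μ] f := by
    rw [Lp.ext_iff]
    have hcoe := Lp.coeFn_compMeasurePreserving f hT
    exact ⟨hcoe.symm.trans, hcoe.trans⟩
  rw [mem_lpMeas_iff_aestronglyMeasurable]
  refine hfix.trans ⟨aestronglyMeasurable_invariants hT.quasiMeasurePreserving
    (Lp.aestronglyMeasurable f), fun hf => ?_⟩
  obtain ⟨g, hg, hfg⟩ := hf
  have hgT := MeasurableSpace.comp_eq_of_measurable_invariants hg.measurable
  calc f ∘ T =ᵐ[μ] g ∘ T := hT.quasiMeasurePreserving.ae_eq_comp hfg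
    _ = g := hgT
    _ =ᵐ[μ] f := hfg.symm

theorem birkhoffAverage_compMeasurePreserving_ae_eq (hT : MeasurePreserving T μ μ) {f : X → ℝ}
    (hf : MemLp f 2 μ) (n : ℕ) :
    (birkhoffAverage ℝ (Lp.compMeasurePreserving T hT) id n (hf.toLp f) : Lp ℝ 2 μ) =ᵐ[μ]
      birkhoffAverage ℝ T f n := by
  have hiter (k : ℕ) : (Lp.compMeasurePreserving T hT)^[k] (hf.toLp f) =ᵐ[μ] f ∘ T^[k] := by
    rw [Lp.compMeasurePreserving_iterate]
    exact (hf.comp_measurePreserving (hT.iterate k)).coeFn_toLp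
  have hsum := Lp.coeFn_finsetSum (Finset.range n)
    fun k => (Lp.compMeasurePreserving T hT)^[k] (hf.toLp f)
  filter_upwards [Lp.coeFn_smul (n : ℝ)⁻¹ (birkhoffSum (Lp.compMeasurePreserving T hT) id n
    (hf.toLp f)), hsum, ae_all_iff.2 hiter] with x hsmul hsum hiter
  rw [birkhoffAverage, hsmul, Pi.smul_apply, birkhoffSum]
  simp only [id_eq, hsum, Finset.sum_apply, hiter]
  rfl

theorem tendsto_eLpNorm_birkhoffAverage_sub_condExp [IsFiniteMeasure μ]
    (hT : MeasurePreserving T μ μ) {f : X → ℝ} (hf : MemLp f 2 μ) :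
    Tendsto (fun n => eLpNorm (birkhoffAverage ℝ T f n - μ[f | MeasurableSpace.invariants T]) 2 μ)
      atTop (𝓝 0) := by
  let K := (Lp.compMeasurePreservingₗᵢ ℝ T hT : Lp ℝ 2 μ →ₗᵢ[ℝ] _).toContinuousLinearMap
  have hlim := K.tendsto_birkhoffAverage_orthogonalProjection
    (LinearIsometry.norm_toContinuousLinearMap_le _) (hf.toLp f)
  have hproj : ((K.eqLocus (1 : Lp ℝ 2 μ →L[ℝ] Lp ℝ 2 μ)).orthogonalProjectionOnto (hf.toLp f) :
      Lp ℝ 2 μ) = condExpL2 ℝ ℝ (MeasurableSpace.invariants_le T) (hf.toLp f) := by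
    have : Fact (MeasurableSpace.invariants T ≤ _) := ⟨MeasurableSpace.invariants_le T⟩
    have hcongr {S S' : Submodule ℝ (Lp ℝ 2 μ)} [S.HasOrthogonalProjection]
        [S'.HasOrthogonalProjection] (hS : S = S') :
        (S.orthogonalProjectionOnto (hf.toLp f) : Lp ℝ 2 μ) =
          S'.orthogonalProjectionOnto (hf.toLp f) := by
      subst hS
      rfl
    exact hcongr (eqLocus_compMeasurePreserving_eq_lpMeas hT)
  rw [hproj, Lp.tendsto_Lp_iff_tendsto_eLpNorm'] at hlim
  refine hlim.congr fun n => eLpNorm_congr_ae ?_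
  exact (birkhoffAverage_compMeasurePreserving_ae_eq hT hf n).sub
    (hf.condExpL2_ae_eq_condExp _)

theorem tendstoInMeasure_birkhoffAverage_condExp [IsFiniteMeasure μ]
    (hT : MeasurePreserving T μ μ) {f : X → ℝ} (hf : MemLp f 2 μ) :
    TendstoInMeasure μ (birkhoffAverage ℝ T f) atTop μ[f | MeasurableSpace.invariants T] :=
  tendstoInMeasure_of_tendsto_eLpNorm two_ne_zero
    (aestronglyMeasurable_birkhoffAverage hT.quasiMeasurePreserving hf.aestronglyMeasurable)
    (stronglyMeasurable_condExp.mono (MeasurableSpace.invariants_le T)).aestronglyMeasurable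
    (tendsto_eLpNorm_birkhoffAverage_sub_condExp hT hf)

end MeanErgodic

section ErgodicDecomposition

open ProbabilityTheory MeasurableSpace

variable {X : Type*} {m : MeasurableSpace X} [MeasurableSpace X] {T : X → X} {μ : Measure X}

theorem condExp_invariants_comp [IsFiniteMeasure μ] (hT : MeasurePreserving T μ μ) {f : X → ℝ}
    (hf : Integrable f μ) : μ[f ∘ T | invariants T] =ᵐ[μ] μ[f | invariants T] := by
  refine (ae_eq_condExp_of_forall_setIntegral_eq (invariants_le T)
    (hT.integrable_comp_of_integrable hf) (fun _ _ _ => integrable_condExp.integrableOn)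
    (fun B hB _ => ?_) stronglyMeasurable_condExp.aestronglyMeasurable).symm
  rw [measurableSet_invariants] at hB
  have hTB : MeasurePreserving T (μ.restrict B) (μ.restrict B) := by
    simpa only [hB.2] using hT.restrict_preimage hB.1
  rw [setIntegral_condExp (invariants_le T) hf (measurableSet_invariants.2 hB)]
  conv_lhs => rw [← hTB.map_eq]
  exact integral_map hTB.aemeasurable (by simpa only [hTB.map_eq] using hf.1.restrict)

theorem ergodic_of_condExp_invariants_ae_eq [IsProbabilityMeasure μ]
    (hT : MeasurePreserving T μ μ) {C : Set (Set X)} (hC : IsPiSystem C)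
    (hgen : ‹MeasurableSpace X› = generateFrom C)
    (hconst : ∀ s ∈ C, μ[s.indicator (1 : X → ℝ) | invariants T] =ᵐ[μ] fun _ => μ.real s) :
    Ergodic T μ := by
  refine ⟨hT, ⟨fun B hB hTB => ?_⟩⟩
  have hindep : ∀ s ∈ C, μ.restrict B s = (μ B • μ) s := fun s hs => by
    have hsm : MeasurableSet s := hgen ▸ measurableSet_generateFrom hs
    have hinter : μ.real B * μ.real s = μ.real (s ∩ B) := by
      calc μ.real B * μ.real s = ∫ x in B, (μ[s.indicator (1 : X → ℝ) | invariants T]) x ∂μ := by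
            rw [integral_congr_ae (ae_restrict_of_ae (hconst s hs)), setIntegral_const, smul_eq_mul]
        _ = ∫ x in B, s.indicator 1 x ∂μ := setIntegral_condExp (invariants_le T)
            ((integrable_const (1 : ℝ)).indicator hsm) (measurableSet_invariants.2 ⟨hB, hTB⟩)
        _ = μ.real (s ∩ B) := by
            rw [integral_indicator_one hsm, measureReal_restrict_apply hsm]
    rw [Measure.restrict_apply hsm, Measure.smul_apply, smul_eq_mul, ← ofReal_measureReal,
      ← ofReal_measureReal (s := B), ← ofReal_measureReal (s := s), ← hinter,
      ENNReal.ofReal_mul measureReal_nonneg]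
  have hrestrict : μ.restrict B = μ B • μ := by
    have := Measure.smul_finite μ (measure_ne_top μ B)
    exact ext_of_generate_finite C hgen hC hindep (by simp)
  have hsq : μ B * μ B = μ B := by simpa using (congrArg (· B) hrestrict).symm
  rw [Filter.eventuallyConst_set']
  rcases eq_or_ne (μ B) 0 with h0 | h0
  · exact .inl (ae_eq_empty.2 h0)
  · exact .inr (ae_eq_univ.2 ((prob_compl_eq_zero_iff hB).2
      ((ENNReal.mul_eq_left h0 (measure_ne_top μ B)).1 hsq)))

theorem exists_countable_isPiSystem_generateFrom (X : Type*) [m : MeasurableSpace X]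
    [CountablyGenerated X] :
    ∃ C : Set (Set X), C.Countable ∧ IsPiSystem C ∧ m = generateFrom C := by
  refine ⟨generateSetAlgebra (countableGeneratingSet X),
    countable_generateSetAlgebra (countable_countableGeneratingSet),
    fun s hs t ht _ => isSetAlgebra_generateSetAlgebra.inter_mem hs ht, ?_⟩
  rw [generateFrom_generateSetAlgebra_eq, generateFrom_countableGeneratingSet]

variable [StandardBorelSpace X] [IsFiniteMeasure μ]

theorem ae_ae_condExpKernel (hm : m ≤ ‹MeasurableSpace X›) {p : X → Prop} (hp : ∀ᵐ x ∂μ, p x) :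
    ∀ᵐ x ∂μ, ∀ᵐ y ∂condExpKernel μ m x, p y := by
  have hcomp : ∀ᵐ x ∂condExpKernel μ m ∘ₘ μ.trim hm, p x := by rwa [condExpKernel_comp_trim hm]
  exact ae_of_ae_trim hm (Measure.ae_ae_of_ae_comp hcomp)

theorem ae_ae_condExpKernel_eq (hm : m ≤ ‹MeasurableSpace X›) {f : X → ℝ} (hf : Measurable[m] f) :
    ∀ᵐ x ∂μ, ∀ᵐ y ∂condExpKernel μ m x, f y = f x := by
  have hdiag : ∀ᵐ p ∂μ.trim hm ⊗ₘ condExpKernel μ m, f p.2 = f p.1 := by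
    rw [compProd_trim_condExpKernel hm, ae_map_iff]
    · exact .of_forall fun _ => rfl
    · exact ⟨_, (measurable_id'' hm).prodMk measurable_id, .rfl⟩
    · exact measurableSet_eq_fun (m := m.prod ‹_›)
        ((hf.mono hm le_rfl).comp measurable_snd) (hf.comp measurable_fst)
  exact ae_of_ae_trim hm (Measure.ae_ae_of_ae_compProd hdiag)

theorem tendstoInMeasure_birkhoffAverage_indicator (hT : MeasurePreserving T μ μ) {s : Set X}
    (hs : MeasurableSet s) :
    TendstoInMeasure μ (birkhoffAverage ℝ T (s.indicator 1)) atTop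
      fun x => (condExpKernel μ (invariants T) x).real s :=
  (tendstoInMeasure_birkhoffAverage_condExp hT
    (memLp_indicator_const 2 hs 1 (.inr (measure_ne_top μ s)))).congr_right
    (condExpKernel_ae_eq_condExp (invariants_le T) hs).symm

theorem ae_measurePreserving_condExpKernel_invariants (hT : MeasurePreserving T μ μ) :
    ∀ᵐ x ∂μ, MeasurePreserving T (condExpKernel μ (invariants T) x)
      (condExpKernel μ (invariants T) x) := by
  obtain ⟨C, hC, hpi, hgen⟩ := exists_countable_isPiSystem_generateFrom X
  have hCm : ∀ s ∈ C, MeasurableSet s := fun s hs => hgen ▸ measurableSet_generateFrom hs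
  have hinv : ∀ s ∈ C, ∀ᵐ x ∂μ, (condExpKernel μ (invariants T) x).real (T ⁻¹' s) =
      (condExpKernel μ (invariants T) x).real s := fun s hs => by
    filter_upwards [condExpKernel_ae_eq_condExp (μ := μ) (invariants_le T) (hCm s hs),
      condExpKernel_ae_eq_condExp (μ := μ) (invariants_le T) (hT.measurable (hCm s hs)),
      condExp_invariants_comp hT ((integrable_const (1 : ℝ)).indicator (hCm s hs))]
      with x hs hTs hcomp
    exact hTs.trans (hcomp.trans hs.symm)
  filter_upwards [(ae_ball_iff hC).2 hinv] with x hx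
  refine ⟨hT.measurable, ext_of_generate_finite C hgen hpi (fun s hs => ?_) ?_⟩
  · rw [Measure.map_apply hT.measurable (hCm s hs)]
    exact (measureReal_eq_measureReal_iff).1 (hx s hs)
  · rw [Measure.map_apply hT.measurable .univ, preimage_univ]

theorem ae_ergodic_condExpKernel_invariants (hT : MeasurePreserving T μ μ) :
    ∀ᵐ x ∂μ, Ergodic T (condExpKernel μ (invariants T) x) := by
  obtain ⟨C, hC, hpi, hgen⟩ := exists_countable_isPiSystem_generateFrom X
  have hCm : ∀ s ∈ C, MeasurableSet s := fun s hs => hgen ▸ measurableSet_generateFrom hs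
  have hconv : ∀ s ∈ C, ∃ φ : ℕ → ℕ, StrictMono φ ∧ ∀ᵐ x ∂μ,
      ∀ᵐ y ∂condExpKernel μ (invariants T) x,
        Tendsto (fun i => birkhoffAverage ℝ T (s.indicator (1 : X → ℝ)) (φ i) y) atTop
          (𝓝 ((condExpKernel μ (invariants T) x).real s)) := fun s hs => by
    obtain ⟨φ, hφ, hlim⟩ :=
      (tendstoInMeasure_birkhoffAverage_indicator hT (hCm s hs)).exists_seq_tendsto_ae
    refine ⟨φ, hφ, ?_⟩
    filter_upwards [ae_ae_condExpKernel (invariants_le T) hlim,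
      ae_ae_condExpKernel_eq (invariants_le T)
        (measurable_condExpKernel (μ := μ) (m := invariants T) (hCm s hs)).ennreal_toReal]
      with x hlim hconst
    filter_upwards [hlim, hconst] with y hlim hconst
    rwa [Measure.real, ← hconst]
  choose! φ hφ hconv using hconv
  filter_upwards [ae_measurePreserving_condExpKernel_invariants hT, (ae_ball_iff hC).2 hconv]
    with x hTx hx
  refine ergodic_of_condExp_invariants_ae_eq hTx hpi hgen fun s hs => ?_
  have hs2 : MemLp (s.indicator (1 : X → ℝ)) 2 (condExpKernel μ (invariants T) x) :=
    memLp_indicator_const 2 (hCm s hs) 1 (.inr (measure_ne_top _ s))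
  refine tendstoInMeasure_ae_unique
    ((tendstoInMeasure_birkhoffAverage_condExp hTx hs2).comp (hφ s hs).tendsto_atTop) ?_
  exact tendstoInMeasure_of_tendsto_ae (fun i => aestronglyMeasurable_birkhoffAverage
    hTx.quasiMeasurePreserving hs2.aestronglyMeasurable _) (hx s hs)

end ErgodicDecomposition

section EmpiricalMeasures

variable {X : Type*} [MeasurableSpace X] {T : X → X}

instance isProbabilityMeasure_empMeas (T : X → X) (n : ℕ) [NeZero n] (x : X) :
    IsProbabilityMeasure (empMeas T n x) := by
  constructor
  simp [empMeas, ENNReal.inv_mul_cancel (NeZero.ne (n : ℝ≥0∞)) (ENNReal.natCast_ne_top n)]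

/-- The empirical measure `empMeas T n x` as a point of the space of probability measures, which
requires `n ≠ 0`. -/
def empProb (T : X → X) (n : ℕ) [NeZero n] (x : X) : ProbabilityMeasure X :=
  ⟨empMeas T n x, inferInstance⟩

theorem integral_empProb (T : X → X) (n : ℕ) [NeZero n] (x : X) {f : X → ℝ}
    (hf : StronglyMeasurable f) :
    ∫ y, f y ∂(empProb T n x : Measure X) = birkhoffAverage ℝ T f n x := by
  rw [empProb, ProbabilityMeasure.coe_mk, empMeas, integral_smul_measure,
    integral_finsetSum_measure fun j _ => integrable_dirac' hf enorm_lt_top]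
  simp only [integral_dirac' _ _ hf, ENNReal.toReal_inv, ENNReal.toReal_natCast]
  rfl

theorem real_empProb_compl_lt_iff (n : ℕ) [NeZero n] {x : X} {Z : Set X} (hZ : MeasurableSet Z)
    {δ : ℝ} : (empProb T n x : Measure X).real Zᶜ < δ ↔ x ∈ mostlyIn T Z δ n := by
  rw [← integral_indicator_one hZ.compl,
    integral_empProb T n x (stronglyMeasurable_one.indicator hZ.compl)]
  rfl

variable [TopologicalSpace X] [BorelSpace X] [HasOuterApproxClosed X]

theorem isOpen_setOf_real_lt {F : Set X} (hF : IsClosed F) (c : ℝ) :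
    IsOpen {ν : ProbabilityMeasure X | (ν : Measure X).real F < c} := by
  refine isOpen_iff_eventually.2 fun ν hν => ?_
  have hlim := ProbabilityMeasure.limsup_measure_closed_le_of_tendsto (tendsto_id (x := 𝓝 ν)) hF
  have hc := (ENNReal.lt_ofReal_iff_toReal_lt (measure_ne_top _ F)).2 hν
  filter_upwards [eventually_lt_of_limsup_lt (hlim.trans_lt hc)] with ρ hρ
  exact (ENNReal.lt_ofReal_iff_toReal_lt (measure_ne_top _ F)).1 hρ

theorem measurePreserving_of_tendsto_empProb (hT : Continuous T) {ι : Type*} {l : Filter ι}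
    [l.NeBot] {N : ι → ℕ} (hN : Tendsto N l atTop) {x : ι → X} {μ : ProbabilityMeasure X}
    (hμ : Tendsto (fun i => empProb T (N i + 1) (x i)) l (𝓝 μ)) :
    MeasurePreserving T (μ : Measure X) μ := by
  have := Measure.isProbabilityMeasure_map (μ := (μ : Measure X)) hT.aemeasurable
  refine ⟨hT.measurable, ext_of_forall_integral_eq_of_IsFiniteMeasure fun f => ?_⟩
  rw [integral_map hT.aemeasurable f.continuous.aestronglyMeasurable]
  rw [ProbabilityMeasure.tendsto_iff_forall_integral_tendsto] at hμ
  have hdist (i : ι) : dist (∫ y, f (T y) ∂(empProb T (N i + 1) (x i) : Measure X))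
      (∫ y, f y ∂(empProb T (N i + 1) (x i) : Measure X)) ≤ 2 * ‖f‖ / (N i + 1 : ℕ) := by
    have hcomp : birkhoffAverage ℝ T (f ∘ T) (N i + 1) (x i) =
        birkhoffAverage ℝ T f (N i + 1) (T (x i)) := by
      simp only [birkhoffAverage, birkhoffSum, Function.comp_apply,
        (Function.Commute.iterate_self T _).eq]
    calc _ = dist (birkhoffAverage ℝ T f (N i + 1) (T (x i)))
            (birkhoffAverage ℝ T f (N i + 1) (x i)) := by
          rw [← hcomp, integral_empProb T _ _ f.continuous.stronglyMeasurable,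
            ← integral_empProb T _ _ (f.continuous.comp hT).stronglyMeasurable]
          rfl
      _ = dist (f (T^[N i + 1] (x i))) (f (x i)) / (N i + 1 : ℕ) :=
          dist_birkhoffAverage_apply_birkhoffAverage ..
      _ ≤ 2 * ‖f‖ / (N i + 1 : ℕ) := by
          gcongr
          exact f.dist_le_two_norm _ _
  have hzero : Tendsto (fun i => 2 * ‖f‖ / (N i + 1 : ℕ)) l (𝓝 0) :=
    (tendsto_const_div_atTop_nhds_zero_nat (2 * ‖f‖)).comp ((tendsto_add_atTop_nat 1).comp hN)
  exact tendsto_nhds_unique ((hμ (f.compContinuous ⟨T, hT⟩)).congr_dist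
    (squeeze_zero (fun _ => dist_nonneg) hdist hzero)) (hμ f)

end EmpiricalMeasures

theorem exists_finset_iUnion_mostlyIn_eq_univ {X : Type*} [MetricSpace X] [CompactSpace X]
    [MeasurableSpace X] [BorelSpace X] {T : X → X} (hT : Continuous T) {ι : Type*}
    {V : ι → Set X} (hV : ∀ i, IsOpen (V i)) {δ : ℝ}
    (hδ : ∀ μ : Measure X, IsProbabilityMeasure μ → MeasurePreserving T μ μ →
      ∃ i, μ.real (V i)ᶜ < δ) :
    ∃ s : Finset ι, ∀ᶠ N : ℕ in atTop, ⋃ i ∈ s, mostlyIn T (V i) δ N = univ := by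
  let E (p : ℕ × X) : ProbabilityMeasure X := empProb T (p.1 + 1) p.2
  let L : Filter (ℕ × X) := atTop ×ˢ ⊤
  let O (i : ι) : Set (ProbabilityMeasure X) := {ν | (ν : Measure X).real (V i)ᶜ < δ}
  have hO (i : ι) : IsOpen (O i) := isOpen_setOf_real_lt (hV i).isClosed_compl δ
  have hcover : {ν | MapClusterPt ν L E} ⊆ ⋃ i, O i := fun ν hν => by
    obtain ⟨U, hU, hlim⟩ := mapClusterPt_iff_ultrafilter.1 hν
    exact mem_iUnion.2 (hδ ν inferInstance
      (measurePreserving_of_tendsto_empProb hT (tendsto_fst.mono_left hU) hlim))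
  obtain ⟨s, hs⟩ := isClosed_setOfPred_clusterPt.isCompact.elim_finite_subcover O hO hcover
  have hmem : ⋃ i ∈ s, O i ∈ map E L := isCompact_univ.adherence_nhdset (by simp)
    (isOpen_biUnion fun i _ => hO i) fun ν _ hν => hs hν
  refine ⟨s, ?_⟩
  rw [mem_map, mem_prod_top] at hmem
  rw [← map_add_atTop_eq_nat 1, eventually_map]
  filter_upwards [hmem] with N hN
  refine eq_univ_of_forall fun x => ?_
  obtain ⟨i, hi, hx⟩ := mem_iUnion₂.1 (hN x)
  exact mem_iUnion₂.2 ⟨i, hi, (real_empProb_compl_lt_iff (N + 1) (hV i).measurableSet).1 hx⟩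

section CountableFamilies

variable {X : Type*} [MeasurableSpace X] {δ δ' η : ℝ}

theorem exists_finset_real_compl_biUnion_lt {μ : Measure X} [IsFiniteMeasure μ] {ι : Type*}
    [Countable ι] {A : ι → Set X} (hA : ∀ i, NullMeasurableSet (A i) μ)
    (hcov : ∀ᵐ x ∂μ, ∃ i, x ∈ A i) (hη : 0 < η) :
    ∃ I : Finset ι, μ.real (⋃ i ∈ I, A i)ᶜ < η := by
  have hanti : Antitone fun I : Finset ι => (⋃ i ∈ I, A i)ᶜ := fun I J hIJ =>
    compl_subset_compl.2 (biUnion_subset_biUnion_left hIJ)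
  have hnull (I : Finset ι) : NullMeasurableSet (⋃ i ∈ I, A i)ᶜ μ :=
    (NullMeasurableSet.biUnion I.countable_toSet fun i _ => hA i).compl
  have hzero : μ (⋂ I : Finset ι, (⋃ i ∈ I, A i)ᶜ) = 0 := by
    rw [← compl_iUnion, ← mem_ae_iff]
    filter_upwards [hcov] with x ⟨i, hi⟩
    exact mem_iUnion.2 ⟨{i}, by simpa using hi⟩
  have hlim := tendsto_measure_iInter_atTop hnull hanti ⟨∅, measure_ne_top μ _⟩
  rw [hzero] at hlim
  obtain ⟨I, hI⟩ := (hlim.eventually_lt_const (ENNReal.ofReal_pos.2 hη)).exists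
  exact ⟨I, (ENNReal.lt_ofReal_iff_toReal_lt (measure_ne_top μ _)).1 hI⟩

theorem exists_finset_eventually_real_le_lt_of_tendstoInMeasure {μ : Measure X} [IsFiniteMeasure μ]
    {ι : Type*} [Countable ι] {f : ι → ℕ → X → ℝ} {g : ι → X → ℝ}
    (hg : ∀ i, AEMeasurable (g i) μ) (hfg : ∀ i, TendstoInMeasure μ (f i) atTop (g i))
    (hδ : ∀ᵐ x ∂μ, ∃ i, g i x < δ) (hδ' : δ < δ') (hη : 0 < η) :
    ∃ I : Finset ι, ∀ᶠ N in atTop, μ.real {x | ∀ i ∈ I, δ' ≤ f i N x} < η := by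
  let B (N : ℕ) (i : ι) : Set X := {x | δ' - δ ≤ dist (f i N x) (g i x)}
  have hB (i : ι) : Tendsto (fun N => μ.real (B N i)) atTop (𝓝 0) :=
    tendstoInMeasure_iff_measureReal_dist.1 (hfg i) (δ' - δ) (sub_pos.2 hδ')
  obtain ⟨I, hI⟩ := exists_finset_real_compl_biUnion_lt (A := fun i => {x | g i x < δ})
    (fun i => nullMeasurableSet_lt (hg i) aemeasurable_const) hδ hη
  set A := ⋃ i ∈ I, {x | g i x < δ}
  have hsub (N : ℕ) : {x | ∀ i ∈ I, δ' ≤ f i N x} ⊆ Aᶜ ∪ ⋃ i ∈ I, B N i := by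
    refine fun x hx => (em (x ∈ A)).elim (fun hxA => Or.inr ?_) Or.inl
    obtain ⟨i, hi, hxi⟩ := mem_iUnion₂.1 hxA
    have hgap : δ' - δ ≤ dist (f i N x) (g i x) :=
      (sub_le_sub (hx i hi) (le_of_lt hxi)).trans (le_abs_self _)
    exact mem_iUnion₂.2 ⟨i, hi, hgap⟩
  have hlim : Tendsto (fun N => μ.real Aᶜ + ∑ i ∈ I, μ.real (B N i)) atTop (𝓝 (μ.real Aᶜ)) := by
    simpa using (tendsto_finsetSum I fun i _ => hB i).const_add (μ.real Aᶜ)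
  refine ⟨I, (hlim.eventually_lt_const hI).mono fun N hN => ?_⟩
  calc μ.real {x | ∀ i ∈ I, δ' ≤ f i N x}
      ≤ μ.real (Aᶜ ∪ ⋃ i ∈ I, B N i) := measureReal_mono (hsub N)
    _ ≤ μ.real Aᶜ + μ.real (⋃ i ∈ I, B N i) := measureReal_union_le _ _
    _ ≤ μ.real Aᶜ + ∑ i ∈ I, μ.real (B N i) := by
      gcongr
      exact measureReal_biUnion_finset_le I (B N)
    _ < η := hN

theorem exists_finset_eventually_real_compl_biUnion_mostlyIn_lt [StandardBorelSpace X]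
    {T : X → X} {μ : Measure X} [IsFiniteMeasure μ] (hT : MeasurePreserving T μ μ) {ι : Type*}
    [Countable ι] {V : ι → Set X} (hV : ∀ i, MeasurableSet (V i))
    (hδ : ∀ᵐ x ∂μ, ∃ i,
      (ProbabilityTheory.condExpKernel μ (MeasurableSpace.invariants T) x).real (V i)ᶜ < δ)
    (hδ' : δ < δ') (hη : 0 < η) :
    ∃ I : Finset ι, ∀ᶠ N in atTop, μ.real (⋃ i ∈ I, mostlyIn T (V i) δ' N)ᶜ < η := by
  have hmeas (i : ι) : AEMeasurable (fun x =>
      (ProbabilityTheory.condExpKernel μ (MeasurableSpace.invariants T) x).real (V i)ᶜ) μ :=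
    ((ProbabilityTheory.measurable_condExpKernel (hV i).compl).mono
      (MeasurableSpace.invariants_le T) le_rfl).ennreal_toReal.aemeasurable
  obtain ⟨I, hI⟩ := exists_finset_eventually_real_le_lt_of_tendstoInMeasure hmeas
    (fun i => tendstoInMeasure_birkhoffAverage_indicator hT (hV i).compl) hδ hδ' hη
  refine ⟨I, hI.mono fun N hN => ?_⟩
  convert hN using 2
  ext x
  simp [mostlyIn]

end CountableFamilies

section KatokCoverable

variable {X : Type*} [MeasurableSpace X] {T : X → X} {δ ε η h h' : ℝ}

/-- Katok's covering condition at rate `h`: for infinitely many `n`, some open set whose complement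
has measure less than `δ` has a Bowen cover of cardinality at most `exp (n * h)`. -/
def KatokCoverable [PseudoMetricSpace X] (T : X → X) (μ : Measure X) (ε δ h : ℝ) : Prop :=
  ∃ᶠ n : ℕ in atTop, ∃ U, IsOpen U ∧ μ.real Uᶜ < δ ∧ HasBowenCover T ε n U (Real.exp (n * h))

theorem exists_eventually_hasBowenCover_mostlyIn {X : Type*} [PseudoMetricSpace X] [CompactSpace X]
    (T : X → X) (hε : 0 < ε) (hh : 0 ≤ h) (hh' : h < h') :
    ∃ δ ∈ Ioo (0 : ℝ) 1, ∀ᶠ n : ℕ in atTop, ∀ Z, HasBowenCover T ε n Z (Real.exp (n * h)) →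
      ∀ᶠ N : ℕ in atTop, HasBowenCover T ε N (mostlyIn T Z δ N) (Real.exp (N * h')) := by
  obtain ⟨k, hk, hone⟩ := exists_hasBowenCover_one T hε
  obtain ⟨δ, hδ, hδk⟩ : ∃ δ ∈ Ioo (0 : ℝ) 1, δ * (k + Real.log 2) < h' - h := by
    have hK : 0 < k + Real.log 2 := add_pos_of_nonneg_of_pos hk (Real.log_pos one_lt_two)
    obtain ⟨δ, hδ, hlt⟩ := exists_between (lt_min one_pos (div_pos (sub_pos.2 hh') hK))
    exact ⟨δ, ⟨hδ, hlt.trans_le (min_le_left _ _)⟩,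
      (lt_div_iff₀ hK).1 (hlt.trans_le (min_le_right _ _))⟩
  have hlog : ∀ᶠ n : ℕ in atTop, Real.log 2 / n < h' - h - δ * (k + Real.log 2) :=
    (tendsto_const_div_atTop_nhds_zero_nat (Real.log 2)).eventually_lt_const (sub_pos.2 hδk)
  refine ⟨δ, hδ, ?_⟩
  filter_upwards [hlog, eventually_gt_atTop 0] with n hn hn₀ Z hZ
  exact HasBowenCover.eventually_mostlyIn hone hk hn₀ hh hZ hδ.1.le (by linarith)

theorem KatokCoverable.exists_isOpen_of_eventually [PseudoMetricSpace X] {μ : Measure X}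
    (hμ : KatokCoverable T μ ε δ h) {p : Set X → Prop}
    (hp : ∀ᶠ n : ℕ in atTop, ∀ Z, HasBowenCover T ε n Z (Real.exp (n * h)) → p Z) :
    ∃ U, IsOpen U ∧ μ.real Uᶜ < δ ∧ p U := by
  obtain ⟨n, ⟨U, hU, hμU, hcov⟩, hn⟩ := (hμ.and_eventually hp).exists
  exact ⟨U, hU, hμU, hn U hcov⟩

variable [MetricSpace X] [CompactSpace X] [BorelSpace X]

theorem katokCoverable_of_ergodic (hT : Continuous T) (hε : 0 < ε) (hh : 0 ≤ h) (hh' : h < h')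
    (herg : ∀ ν : Measure X, IsProbabilityMeasure ν → Ergodic T ν →
      ∀ δ ∈ Ioo (0 : ℝ) 1, KatokCoverable T ν ε δ h)
    {μ : Measure X} [IsProbabilityMeasure μ] (hμ : MeasurePreserving T μ μ) (hη : 0 < η) :
    KatokCoverable T μ ε η h' := by
  obtain ⟨h₁, hh₁, hh₁'⟩ := exists_between hh'
  obtain ⟨δ, ⟨hδ, hδ₁⟩, hcov⟩ := exists_eventually_hasBowenCover_mostlyIn T hε hh hh₁
  let 𝒱 : Set (Set X) := {U | IsOpen U ∧
    ∀ᶠ N : ℕ in atTop, HasBowenCover T ε N (mostlyIn T U δ N) (Real.exp (N * h₁))}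
  let O (U : 𝒱) : Set (ProbabilityMeasure X) := {ν | (ν : Measure X).real (U : Set X)ᶜ < δ / 2}
  have hO (U : 𝒱) : IsOpen (O U) := isOpen_setOf_real_lt U.2.1.isClosed_compl (δ / 2)
  have : SecondCountableTopology (ProbabilityMeasure X) := by
    let := TopologicalSpace.metrizableSpaceMetric (ProbabilityMeasure X)
    infer_instance
  obtain ⟨𝒲, h𝒲, hO𝒲⟩ := TopologicalSpace.isOpen_iUnion_countable O hO
  have := h𝒲.to_subtype
  have hκ : ∀ᵐ x ∂μ, ∃ U : 𝒲,
      (ProbabilityTheory.condExpKernel μ (MeasurableSpace.invariants T) x).real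
        (U : Set X)ᶜ < δ / 2 := by
    filter_upwards [ae_ergodic_condExpKernel_invariants hμ] with x hx
    obtain ⟨U, hU, hxU, hcovU⟩ :=
      (herg _ inferInstance hx (δ / 2)
        ⟨half_pos hδ, (half_lt_self hδ).trans hδ₁⟩).exists_isOpen_of_eventually hcov
    have hmem : (⟨_, inferInstance⟩ : ProbabilityMeasure X) ∈ ⋃ U, O U :=
      mem_iUnion.2 ⟨⟨U, hU, hcovU⟩, hxU⟩
    obtain ⟨W, hW, hxW⟩ := mem_iUnion₂.1 (hO𝒲.symm ▸ hmem)
    exact ⟨⟨W, hW⟩, hxW⟩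
  obtain ⟨I, hI⟩ := exists_finset_eventually_real_compl_biUnion_mostlyIn_lt hμ
    (fun U : 𝒲 => U.1.2.1.measurableSet) hκ (half_lt_self hδ) hη
  have hcovI := eventually_hasBowenCover_biUnion (s := I) (fun U _ => U.1.2.2) hh₁'
  refine (hI.and hcovI).frequently.mono fun N hN => ⟨_, ?_, hN⟩
  exact isOpen_biUnion fun U _ => isOpen_mostlyIn hT U.1.2.1 δ N

theorem eventually_hasBowenCover_univ_of_ergodic (hT : Continuous T) (hε : 0 < ε) (hh : 0 ≤ h)
    (hh' : h < h') (herg : ∀ ν : Measure X, IsProbabilityMeasure ν → Ergodic T ν →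
      ∀ δ ∈ Ioo (0 : ℝ) 1, KatokCoverable T ν ε δ h) :
    ∀ᶠ N : ℕ in atTop, HasBowenCover T ε N univ (Real.exp (N * h')) := by
  obtain ⟨h₁, hh₁, hh₁'⟩ := exists_between hh'
  obtain ⟨h₂, hh₂, hh₂'⟩ := exists_between hh₁'
  obtain ⟨δ, hδ, hcov⟩ := exists_eventually_hasBowenCover_mostlyIn T hε (hh.trans hh₁.le) hh₂
  let 𝒱 : Set (Set X) := {U | IsOpen U ∧
    ∀ᶠ N : ℕ in atTop, HasBowenCover T ε N (mostlyIn T U δ N) (Real.exp (N * h₂))}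
  obtain ⟨s, hs⟩ := exists_finset_iUnion_mostlyIn_eq_univ hT (fun U : 𝒱 => U.2.1) (δ := δ)
    fun μ _ hμ => by
      obtain ⟨U, hU, hμU, hcovU⟩ :=
        (katokCoverable_of_ergodic hT hε hh hh₁ herg hμ hδ.1).exists_isOpen_of_eventually hcov
      exact ⟨⟨U, hU, hcovU⟩, hμU⟩
  filter_upwards [hs, eventually_hasBowenCover_biUnion (s := s) (fun U _ => U.2.2) hh₂']
    with N hN hcovN
  exact hN ▸ hcovN

end KatokCoverable

section KatokEntropy

theorem ofReal_log_div_le_ofReal_iff {m n : ℕ} {h : ℝ} (hn : 0 < n) (hh : 0 ≤ h) :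
    ENNReal.ofReal (Real.log m) / n ≤ ENNReal.ofReal h ↔ (m : ℝ) ≤ Real.exp (n * h) := by
  rw [← ENNReal.ofReal_natCast, ← ENNReal.ofReal_div_of_pos (Nat.cast_pos.2 hn),
    ENNReal.ofReal_le_ofReal_iff hh, div_le_iff₀' (Nat.cast_pos.2 hn)]
  rcases m.eq_zero_or_pos with rfl | hm
  · simpa [(Real.exp_pos _).le] using mul_nonneg n.cast_nonneg hh
  · exact Real.log_le_iff_le_exp (Nat.cast_pos.2 hm)

variable {X : Type*} [PseudoMetricSpace X] {T : X → X} {δ ε h : ℝ}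

theorem spanGrowth_le_ofReal (hε : 0 < ε) (hh : 0 ≤ h)
    (hcov : ∀ᶠ N : ℕ in atTop, HasBowenCover T ε N univ (Real.exp (N * h))) :
    spanGrowth T ε ≤ ENNReal.ofReal h := by
  refine limsup_le_of_le (by isBoundedDefault) ?_
  filter_upwards [hcov, eventually_gt_atTop 0] with N hN hN₀
  exact (ofReal_log_div_le_ofReal_iff hN₀ hh).2 (hN.spanNum_le hε)

variable [CompactSpace X]

theorem exists_card_eq_spanNum (T : X → X) (hε : 0 < ε) (n : ℕ) :
    ∃ E : Finset X, E.card = spanNum T n ε univ ∧ ∀ z, ∃ y ∈ E, bowenDist T n z y < ε := by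
  obtain ⟨h, -, hone⟩ := exists_hasBowenCover_one T hε
  obtain ⟨E₀, -, hE₀⟩ := (hone.iterate_univ n).exists_spanning hε
  obtain ⟨E, hcard, hE⟩ := Nat.sInf_mem (s := {k | ∃ E : Finset X, E.card = k ∧
    ∀ z ∈ univ, ∃ y ∈ E, bowenDist T n z y < ε}) ⟨_, E₀, rfl, fun z _ => hE₀ z⟩
  exact ⟨E, hcard, fun z => hE z (mem_univ z)⟩

variable [MeasurableSpace X]

theorem exists_card_eq_spanNum_and_ofReal_lt (T : X → X) (μ : Measure X) [IsProbabilityMeasure μ]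
    (hε : 0 < ε) (hδ : 0 < δ) (n : ℕ) :
    ∃ E : Finset X, E.card = spanNum T n ε univ ∧
      ENNReal.ofReal (1 - δ) < μ (⋃ x ∈ E, {y | bowenDist T n x y < ε}) := by
  obtain ⟨E, hcard, hE⟩ := exists_card_eq_spanNum T hε n
  have huniv : ⋃ x ∈ E, {y | bowenDist T n x y < ε} = univ := eq_univ_of_forall fun z => by
    obtain ⟨y, hy, hd⟩ := hE z
    refine mem_iUnion₂.2 ⟨y, hy, (bowenDist_lt_iff hε).2 fun j hj => ?_⟩
    exact dist_comm (T^[j] z) _ ▸ (bowenDist_lt_iff hε).1 hd j hj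
  refine ⟨E, hcard, ?_⟩
  rw [huniv, measure_univ, ENNReal.ofReal_lt_one]
  exact sub_lt_self 1 hδ

theorem katokUpper_le_spanGrowth (T : X → X) (μ : Measure X) [IsProbabilityMeasure μ]
    (hε : 0 < ε) : katokUpper T μ ε ≤ spanGrowth T ε := by
  refine iSup₂_le fun δ hδ => limsup_le_limsup (Eventually.of_forall fun n => ?_)
  have hle : katokNum T μ n ε δ ≤ spanNum T n ε univ :=
    Nat.sInf_le (exists_card_eq_spanNum_and_ofReal_lt T μ hε hδ.1 n)
  rcases (katokNum T μ n ε δ).eq_zero_or_pos with hzero | hpos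
  · simp [hzero]
  · dsimp only
    gcongr

theorem katokCoverable_of_katokLower_lt [OpensMeasurableSpace X] (hT : Continuous T)
    {μ : Measure X} [IsProbabilityMeasure μ] (hε : 0 < ε) (hδ : δ ∈ Ioo 0 1)
    (hlt : katokLower T μ ε < ENNReal.ofReal h) : KatokCoverable T μ (2 * ε) δ h := by
  have hh : 0 < h := ENNReal.ofReal_pos.1 (bot_le.trans_lt hlt)
  have hltD : katokLowerD T μ ε δ < ENNReal.ofReal h :=
    (le_iSup₂ (f := fun δ (_ : δ ∈ Ioo (0 : ℝ) 1) => katokLowerD T μ ε δ) δ hδ).trans_lt hlt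
  have hfreq := frequently_lt_of_liminf_lt (by isBoundedDefault) hltD
  refine (hfreq.and_eventually (eventually_gt_atTop 0)).mono fun n ⟨hn, hn₀⟩ => ?_
  obtain ⟨E₀, -, hE₀⟩ := exists_card_eq_spanNum_and_ofReal_lt T μ hε hδ.1 n
  obtain ⟨E, hcard, hE⟩ : ∃ E : Finset X, E.card = katokNum T μ n ε δ ∧
      ENNReal.ofReal (1 - δ) < μ (⋃ x ∈ E, {y | bowenDist T n x y < ε}) :=
    Nat.sInf_mem (s := {k | ∃ E : Finset X, E.card = k ∧
      ENNReal.ofReal (1 - δ) < μ (⋃ x ∈ E, {y | bowenDist T n x y < ε})}) ⟨_, E₀, rfl, hE₀⟩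
  have hopen := isOpen_biUnion_bowenBall hT hε n E
  refine ⟨_, hopen, ?_, (hasBowenCover_biUnion_ball hε n E).mono Subset.rfl ?_⟩
  · rw [probReal_compl_eq_one_sub hopen.measurableSet, sub_lt_comm]
    exact (ENNReal.ofReal_lt_iff_lt_toReal (sub_nonneg.2 hδ.2.le) (measure_ne_top μ _)).1 hE
  · exact hcard ▸ (ofReal_log_div_le_ofReal_iff hn₀ hh.le).1 hn.le

end KatokEntropy

theorem spanGrowth_two_mul_le_iSup_katokLower {X : Type*} [MetricSpace X] [CompactSpace X]
    [MeasurableSpace X] [BorelSpace X] {T : X → X} (hT : Continuous T) {ε : ℝ} (hε : 0 < ε) :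
    spanGrowth T (2 * ε) ≤
      ⨆ (μ : Measure X) (_ : IsProbabilityMeasure μ) (_ : Ergodic T μ), katokLower T μ ε := by
  refine le_of_forall_gt fun c hc => ?_
  obtain ⟨h, hlt, hhc⟩ := ENNReal.lt_iff_exists_nnreal_btwn.1 hc
  obtain ⟨h', hhh', hh'c⟩ := ENNReal.lt_iff_exists_nnreal_btwn.1 hhc
  have herg (ν : Measure X) (hν : IsProbabilityMeasure ν) (hTν : Ergodic T ν) (δ : ℝ)
      (hδ : δ ∈ Ioo (0 : ℝ) 1) : KatokCoverable T ν (2 * ε) δ h := by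
    refine katokCoverable_of_katokLower_lt hT hε hδ ?_
    rw [ENNReal.ofReal_coe_nnreal]
    refine lt_of_le_of_lt ?_ hlt
    exact le_iSup_of_le ν (le_iSup_of_le hν (le_iSup_of_le hTν le_rfl))
  have hcov := eventually_hasBowenCover_univ_of_ergodic hT (by positivity) h.coe_nonneg
    (NNReal.coe_lt_coe.2 (ENNReal.coe_lt_coe.1 hhh')) herg
  calc spanGrowth T (2 * ε) ≤ ENNReal.ofReal h' :=
        spanGrowth_le_ofReal (by positivity) h'.coe_nonneg hcov
    _ = h' := ENNReal.ofReal_coe_nnreal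
    _ < c := hh'c

section Liminf

theorem liminf_div_log_mono {S G : ℝ → ℝ≥0∞} (hSG : ∀ᶠ ε in 𝓝[>] 0, S ε ≤ G ε) :
    liminf (fun ε : ℝ => S ε / ENNReal.ofReal (Real.log (1 / ε))) (𝓝[>] 0) ≤
      liminf (fun ε : ℝ => G ε / ENNReal.ofReal (Real.log (1 / ε))) (𝓝[>] 0) :=
  liminf_le_liminf (hSG.mono fun _ hε => ENNReal.div_le_div_right hε _)

theorem tendsto_log_one_div_nhdsGT_zero :
    Tendsto (fun ε : ℝ => Real.log (1 / ε)) (𝓝[>] 0) atTop := by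
  simpa only [one_div] using! Real.tendsto_log_atTop.comp tendsto_inv_nhdsGT_zero

theorem tendsto_log_one_div_div_log_one_div_mul {a : ℝ} (ha : 0 < a) :
    Tendsto (fun ε : ℝ => Real.log (1 / ε) / Real.log (1 / (a * ε))) (𝓝[>] 0) (𝓝 1) := by
  have hsum : Tendsto (fun ε : ℝ => Real.log (1 / ε) - Real.log a) (𝓝[>] 0) atTop :=
    tendsto_atTop_add_const_right _ _ tendsto_log_one_div_nhdsGT_zero
  have hone : Tendsto (fun ε : ℝ => 1 + Real.log a / (Real.log (1 / ε) - Real.log a)) (𝓝[>] 0)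
      (𝓝 1) := by
    simpa using (hsum.const_div_atTop (Real.log a)).const_add 1
  refine hone.congr' ?_
  filter_upwards [self_mem_nhdsWithin, hsum.eventually_gt_atTop 0] with ε hε hpos
  have hmul : Real.log (1 / (a * ε)) = Real.log (1 / ε) - Real.log a := by
    rw [one_div, one_div, Real.log_inv, Real.log_inv, Real.log_mul ha.ne' (ne_of_gt hε)]
    ring
  rw [hmul, one_add_div hpos.ne', sub_add_cancel]

theorem liminf_div_log_le_of_comp_mul_le {S G : ℝ → ℝ≥0∞} {a : ℝ} (ha : 0 < a)
    (hSG : ∀ᶠ ε in 𝓝[>] 0, S (a * ε) ≤ G ε) :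
    liminf (fun ε : ℝ => S ε / ENNReal.ofReal (Real.log (1 / ε))) (𝓝[>] 0) ≤
      liminf (fun ε : ℝ => G ε / ENNReal.ofReal (Real.log (1 / ε))) (𝓝[>] 0) := by
  let L (ε : ℝ) : ℝ≥0∞ := ENNReal.ofReal (Real.log (1 / ε))
  let ratio (ε : ℝ) : ℝ≥0∞ := ENNReal.ofReal (Real.log (1 / ε) / Real.log (1 / (a * ε)))
  have hratio : limsup ratio (𝓝[>] 0) = 1 := by
    have hlim := ENNReal.tendsto_ofReal (tendsto_log_one_div_div_log_one_div_mul ha)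
    exact (ENNReal.ofReal_one ▸ hlim).limsup_eq
  have hscale : map (a * ·) (𝓝[>] (0 : ℝ)) = 𝓝[>] 0 := by
    conv_lhs => rw [← comap_mulLeft_nhdsGT_zero ha]
    exact map_comap_of_surjective (mul_left_surjective₀ ha.ne') _
  calc liminf (fun ε => S ε / L ε) (𝓝[>] 0)
      = liminf (fun ε => S (a * ε) / L (a * ε)) (𝓝[>] 0) := by
        conv_lhs => rw [← hscale]
        rfl
    _ ≤ liminf (ratio * fun ε => G ε / L ε) (𝓝[>] 0) := by
      refine liminf_le_liminf ?_
      have hL := tendsto_log_one_div_nhdsGT_zero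
      have hscale' : Tendsto (a * ·) (𝓝[>] (0 : ℝ)) (𝓝[>] 0) := hscale.le
      filter_upwards [hSG, hL.eventually_gt_atTop 0, (hL.comp hscale').eventually_gt_atTop 0]
        with ε hε hpos hpos'
      calc S (a * ε) / L (a * ε) ≤ G ε / L (a * ε) := by gcongr
        _ = L ε / L (a * ε) * (G ε / L ε) := by
          rw [← ENNReal.mul_div_right_comm,
            ENNReal.mul_div_cancel (ENNReal.ofReal_pos.2 hpos).ne' ENNReal.ofReal_ne_top]
        _ = ratio ε * (G ε / L ε) :=
          congrArg (· * (G ε / L ε)) (ENNReal.ofReal_div_of_pos hpos').symm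
    _ ≤ limsup ratio (𝓝[>] 0) * liminf (fun ε => G ε / L ε) (𝓝[>] 0) := by
      refine ENNReal.liminf_mul_le ?_ ?_ <;> simp [hratio]
    _ = liminf (fun ε => G ε / L ε) (𝓝[>] 0) := by rw [hratio, one_mul]

end Liminf

end MMD

/-- Theorem 3.3 (lower part): variational principles for the lower metric mean dimension in
terms of the lower and upper Katok entropies, over ergodic measures. -/
theorem stmt6 {X : Type*} [MetricSpace X] [CompactSpace X] [MeasurableSpace X] [BorelSpace X]
    (T : X → X) (hT : Continuous T) :
    mdimMLower T = Filter.liminf (fun ε : ℝ =>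
        (⨆ (μ : Measure X) (_ : IsProbabilityMeasure μ) (_ : Ergodic T μ), katokLower T μ ε)
          / ENNReal.ofReal (Real.log (1 / ε))) (nhdsWithin 0 (Set.Ioi 0)) ∧
    mdimMLower T = Filter.liminf (fun ε : ℝ =>
        (⨆ (μ : Measure X) (_ : IsProbabilityMeasure μ) (_ : Ergodic T μ), katokUpper T μ ε)
          / ENNReal.ofReal (Real.log (1 / ε))) (nhdsWithin 0 (Set.Ioi 0)) := by
  have hspan : ∀ᶠ ε : ℝ in 𝓝[>] 0, spanGrowth T (2 * ε) ≤
      ⨆ (μ : Measure X) (_ : IsProbabilityMeasure μ) (_ : Ergodic T μ), katokLower T μ ε :=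
    eventually_mem_nhdsWithin.mono fun ε hε => spanGrowth_two_mul_le_iSup_katokLower hT hε
  have hmono (ε : ℝ) :
      ⨆ (μ : Measure X) (_ : IsProbabilityMeasure μ) (_ : Ergodic T μ), katokLower T μ ε ≤
      ⨆ (μ : Measure X) (_ : IsProbabilityMeasure μ) (_ : Ergodic T μ), katokUpper T μ ε :=
    iSup_mono fun μ => iSup₂_mono fun _ _ => iSup₂_mono fun _ _ => liminf_le_limsup
  have hupper : ∀ᶠ ε : ℝ in 𝓝[>] 0,
      ⨆ (μ : Measure X) (_ : IsProbabilityMeasure μ) (_ : Ergodic T μ), katokUpper T μ ε ≤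
      spanGrowth T ε :=
    eventually_mem_nhdsWithin.mono fun ε hε =>
      iSup_le fun μ => iSup₂_le fun _ _ => katokUpper_le_spanGrowth T μ hε
  have hle₁ := liminf_div_log_le_of_comp_mul_le two_pos hspan
  have hle₂ := liminf_div_log_mono (Eventually.of_forall hmono)
  have hle₃ := liminf_div_log_mono hupper
  exact ⟨hle₁.antisymm (hle₂.trans hle₃), (hle₁.trans hle₂).antisymm hle₃⟩
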